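/- Let h be a real-valued C^2 function on an open subset of ℝ² with h(u,v) > 0, and define the critical end chart β(u,v) = (u/h(u,v), v/h(u,v), 1/h(u,v)) ∈ ℝ³. Then the triple products of the second partial derivatives of β with β_u and β_v satisfy det[β_uu, β_u, β_v] = −h_uu/h⁴, det[β_uv, β_u, β_v] = −h_uv/h⁴, and det[β_vv, β_u, β_v] = −h_vv/h⁴, where det[X,Y,Z] denotes the determinant of the 3×3 matrix with rows (or columns) X, Y, Z in ℝ³ and h_uu, h_uv, h_vv are the second partial derivatives of h. Consequently the second fundamental form coefficients e = det[β_uu, β_u, β_v]/|β_u × β_v|, f = det[β_uv, β_u, β_v]/|β_u × β_v|, g = det[β_vv, β_u, β_v]/|β_u × β_v| equal −h_uu/(h⁴√(EG−F²)), −h_uv/(h⁴√(EG−F²)), −h_vv/(h⁴√(EG−F²)) respectively, where EG − F² = |β_u × β_v|². -/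

import Mathlib

noncomputable section

/-- Euclidean dot product on `ℝ³` (as `Fin 3 → ℝ`). -/
def dot3 (x y : Fin 3 → ℝ) : ℝ := x 0 * y 0 + x 1 * y 1 + x 2 * y 2

/-- Standard cross product on `ℝ³`. -/
def cross3 (x y : Fin 3 → ℝ) : Fin 3 → ℝ :=
  ![x 1 * y 2 - x 2 * y 1, x 2 * y 0 - x 0 * y 2, x 0 * y 1 - x 1 * y 0]

/-- Triple (determinant) product of three vectors in `ℝ³`. -/
def det3 (x y z : Fin 3 → ℝ) : ℝ := Matrix.det (Matrix.of ![x, y, z])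

/-- Partial derivative with respect to the first variable `u`. -/
def pdu (f : ℝ × ℝ → ℝ) (p : ℝ × ℝ) : ℝ := fderiv ℝ f p (1, 0)

/-- Partial derivative with respect to the second variable `v`. -/
def pdv (f : ℝ × ℝ → ℝ) (p : ℝ × ℝ) : ℝ := fderiv ℝ f p (0, 1)

/-- Partial derivative (vector valued) with respect to the first variable. -/
def vdu (f : ℝ × ℝ → Fin 3 → ℝ) (p : ℝ × ℝ) : Fin 3 → ℝ := fderiv ℝ f p (1, 0)

/-- Partial derivative (vector valued) with respect to the second variable. -/
def vdv (f : ℝ × ℝ → Fin 3 → ℝ) (p : ℝ × ℝ) : Fin 3 → ℝ := fderiv ℝ f p (0, 1)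

/-!
The chart satisfies `h β = (u, v, 1)`, whose right-hand side is affine. Differentiating once, each
`h β_x` differs from a constant vector by a multiple of `β`; differentiating twice,
`h β_xy + h_y β_x + h_x β_y + h_xy β = 0`. In the determinant the terms in `β_x` and `β_y` drop out,
so `h det[β_xy, β_u, β_v] = -h_xy det[β, β_u, β_v]`, while
`h ^ 3 det[β, β_u, β_v] = det[(u, v, 1), (1, 0, 0), (0, 1, 0)] = 1`.
-/

open Filter Module Topology

section Determinant

variable {R : Type*} [CommRing R] {n : ℕ}

theorem det_vecCons_smul_add_smul (c : R) (w : Fin (n + 1) → R) (v : Fin n → Fin (n + 1) → R)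
    (m : Fin n → R) :
    (Matrix.of (Matrix.vecCons (c • w) fun k => c • v k + m k • w)).det =
      c ^ (n + 1) * (Matrix.of (Matrix.vecCons w v)).det := by
  let ω : (Fin (n + 1) → R) [⋀^Fin (n + 1)]→ₗ[R] R := Matrix.detRowAlternating
  have eliminate_rows : ω (Matrix.vecCons w fun k => c • v k + m k • w) =
      ω (Matrix.vecCons w fun k => c • v k) := by
    refine Matrix.det_eq_of_forall_row_eq_smul_add_const (Matrix.vecCons 0 m) 0 rfl fun i j => ?_
    cases i using Fin.cases <;> simp
  have scale_rows : ω (Matrix.vecCons w fun k => c • v k) = c ^ n * ω (Matrix.vecCons w v) := by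
    simpa using (ω.curryLeft w).map_smul_univ (fun _ => c) v
  calc ω (Matrix.vecCons (c • w) fun k => c • v k + m k • w)
      = c * ω (Matrix.vecCons w fun k => c • v k) := by
        rw [ω.map_vecCons_smul, eliminate_rows, smul_eq_mul]
    _ = c * (c ^ n * ω (Matrix.vecCons w v)) := by
        rw [scale_rows]
    _ = c ^ (n + 1) * ω (Matrix.vecCons w v) := by ring

theorem mul_det_vecCons_of_smul_add_eq_zero {c r s m : R} {z w : Fin (n + 1) → R}
    {v : Fin n → Fin (n + 1) → R} {i j : Fin n}
    (hz : c • z + r • v i + s • v j + m • w = 0) :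
    c * (Matrix.of (Matrix.vecCons z v)).det = -m * (Matrix.of (Matrix.vecCons w v)).det := by
  let ω : (Fin (n + 1) → R) [⋀^Fin (n + 1)]→ₗ[R] R := Matrix.detRowAlternating
  have repeated_row (k : Fin n) : ω (Matrix.vecCons (v k) v) = 0 :=
    ω.map_eq_zero_of_eq _ (i := 0) (j := k.succ) rfl (Fin.succ_ne_zero k).symm
  have expand : ω (Matrix.vecCons (c • z + r • v i + s • v j + m • w) v) =
      c * ω (Matrix.vecCons z v) + m * ω (Matrix.vecCons w v) := by
    simp only [ω.map_vecCons_add, ω.map_vecCons_smul, repeated_row, smul_eq_mul, mul_zero,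
      add_zero]
  have vanish : ω (Matrix.vecCons (c • z + r • v i + s • v j + m • w) v) = 0 :=
    ω.map_coord_zero 0 hz
  change c * ω (Matrix.vecCons z v) = -m * ω (Matrix.vecCons w v)
  linear_combination vanish - expand

end Determinant

section ProjectiveChart

variable {𝕜 : Type*} [NontriviallyNormedField 𝕜]
  {E : Type*} [NormedAddCommGroup E] [NormedSpace 𝕜 E]
  {F : Type*} [NormedAddCommGroup F] [NormedSpace 𝕜 F]
  {c : E → 𝕜} {f : E → F} {p : E}

theorem differentiableAt_fderiv_apply (hf : ContDiffAt 𝕜 2 f p) (d : E) :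
    DifferentiableAt 𝕜 (fun q => fderiv 𝕜 f q d) p :=
  ((hf.fderiv_right (m := 1) le_rfl).differentiableAt one_ne_zero).clm_apply
    (differentiableAt_const d)

theorem fderiv_smul_apply (hc : DifferentiableAt 𝕜 c p) (hf : DifferentiableAt 𝕜 f p) (d : E) :
    fderiv 𝕜 (c • f) p d = c p • fderiv 𝕜 f p d + fderiv 𝕜 c p d • f p := by
  simp [fderiv_smul hc hf]

theorem fderiv_fderiv_smul_apply (hc : ContDiffAt 𝕜 2 c p) (hf : ContDiffAt 𝕜 2 f p) (d e : E) :
    fderiv 𝕜 (fun q => fderiv 𝕜 (c • f) q d) p e =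
      c p • fderiv 𝕜 (fun q => fderiv 𝕜 f q d) p e + fderiv 𝕜 c p e • fderiv 𝕜 f p d +
        fderiv 𝕜 c p d • fderiv 𝕜 f p e + fderiv 𝕜 (fun q => fderiv 𝕜 c q d) p e • f p := by
  have hc₁ : DifferentiableAt 𝕜 c p := hc.differentiableAt two_ne_zero
  have hf₁ : DifferentiableAt 𝕜 f p := hf.differentiableAt two_ne_zero
  have hcd := differentiableAt_fderiv_apply hc d
  have hfd := differentiableAt_fderiv_apply hf d
  have leibniz : (fun q => fderiv 𝕜 (c • f) q d) =ᶠ[𝓝 p]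
      c • (fun q => fderiv 𝕜 f q d) + (fun q => fderiv 𝕜 c q d) • f := by
    filter_upwards [hc.eventually (by simp), hf.eventually (by simp)] with q hcq hfq
    exact fderiv_smul_apply (hcq.differentiableAt two_ne_zero)
      (hfq.differentiableAt two_ne_zero) d
  rw [leibniz.fderiv_eq, fderiv_add (hc₁.smul hfd) (hcd.smul hf₁), add_apply,
    fderiv_smul_apply hc₁ hfd, fderiv_smul_apply hcd hf₁]
  abel

theorem contDiffAt_of_smul_eventuallyEq {k : WithTop ℕ∞} {a : E → F} (hc : ContDiffAt 𝕜 k c p)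
    (ha : ContDiffAt 𝕜 k a p) (hp : c p ≠ 0) (h : c • f =ᶠ[𝓝 p] a) : ContDiffAt 𝕜 k f p := by
  refine ((hc.inv hp).smul ha).congr_of_eventuallyEq ?_
  filter_upwards [h, hc.continuousAt.eventually_ne hp] with q hq hcq
  exact show f q = (c q)⁻¹ • a q from (eq_inv_smul_iff₀ hcq).2 hq

variable {a : E →ᴬ[𝕜] F}

theorem smul_fderiv_add_smul_of_smul_eventuallyEq (hc : DifferentiableAt 𝕜 c p)
    (hf : DifferentiableAt 𝕜 f p) (h : c • f =ᶠ[𝓝 p] a) (d : E) :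
    c p • fderiv 𝕜 f p d + fderiv 𝕜 c p d • f p = a.contLinear d := by
  rw [← fderiv_smul_apply hc hf, h.fderiv_eq, a.fderiv]

theorem smul_fderiv_fderiv_add_eq_zero_of_smul_eventuallyEq (hc : ContDiffAt 𝕜 2 c p)
    (hf : ContDiffAt 𝕜 2 f p) (h : c • f =ᶠ[𝓝 p] a) (d e : E) :
    c p • fderiv 𝕜 (fun q => fderiv 𝕜 f q d) p e + fderiv 𝕜 c p e • fderiv 𝕜 f p d +
      fderiv 𝕜 c p d • fderiv 𝕜 f p e + fderiv 𝕜 (fun q => fderiv 𝕜 c q d) p e • f p = 0 := by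
  have constant_fderiv : (fun q => fderiv 𝕜 (c • f) q d) =ᶠ[𝓝 p] fun _ => a.contLinear d := by
    filter_upwards [h.fderiv (𝕜 := 𝕜)] with q hq
    rw [hq, a.fderiv]
  rw [← fderiv_fderiv_smul_apply hc hf, constant_fderiv.fderiv_eq, fderiv_const_apply, zero_apply]

theorem pow_mul_det_vecCons_fderiv_fderiv {n : ℕ} {f : E → Fin (n + 1) → 𝕜}
    {a : E →ᴬ[𝕜] (Fin (n + 1) → 𝕜)} (hc : ContDiffAt 𝕜 2 c p) (hf : ContDiffAt 𝕜 2 f p)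
    (h : c • f =ᶠ[𝓝 p] a) (x : Fin n → E) (i j : Fin n) :
    c p ^ (n + 2) * (Matrix.of (Matrix.vecCons (fderiv 𝕜 (fun q => fderiv 𝕜 f q (x i)) p (x j))
        fun k => fderiv 𝕜 f p (x k))).det =
      -fderiv 𝕜 (fun q => fderiv 𝕜 c q (x i)) p (x j) *
        (Matrix.of (Matrix.vecCons (a p) fun k => a.contLinear (x k))).det := by
  have frame_det : (Matrix.of (Matrix.vecCons (a p) fun k => a.contLinear (x k))).det =
      c p ^ (n + 1) * (Matrix.of (Matrix.vecCons (f p) fun k => fderiv 𝕜 f p (x k))).det := by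
    rw [← det_vecCons_smul_add_smul _ _ _ fun k => fderiv 𝕜 c p (x k)]
    simp only [smul_fderiv_add_smul_of_smul_eventuallyEq (hc.differentiableAt two_ne_zero)
      (hf.differentiableAt two_ne_zero) h, ← h.eq_of_nhds, Pi.smul_apply']
  have second_det := mul_det_vecCons_of_smul_add_eq_zero (v := fun k => fderiv 𝕜 f p (x k))
    (smul_fderiv_fderiv_add_eq_zero_of_smul_eventuallyEq hc hf h (x i) (x j))
  rw [frame_det]
  linear_combination c p ^ (n + 1) * second_det

end ProjectiveChart

section CriticalEndChart

/-- The critical end chart `β(u, v) = (u / h, v / h, 1 / h)` of `h`, with junk value `0`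
where `h` vanishes. -/
def criticalEndChart (h : ℝ × ℝ → ℝ) (q : ℝ × ℝ) : Fin 3 → ℝ :=
  ![q.1 / h q, q.2 / h q, 1 / h q]

/-- The affine embedding `(u, v) ↦ (u, v, 1)` of the plane, which `h` times the critical end chart
of `h` equals wherever `h ≠ 0`. -/
def affineLift : (ℝ × ℝ) →ᴬ[ℝ] (Fin 3 → ℝ) :=
  (ContinuousLinearMap.pi ![.fst ℝ ℝ ℝ, .snd ℝ ℝ ℝ, 0]).toContinuousAffineMap +
    .const ℝ (ℝ × ℝ) ![0, 0, 1]

theorem affineLift_apply (q : ℝ × ℝ) : affineLift q = ![q.1, q.2, 1] := by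
  ext k; fin_cases k <;> simp [affineLift]

theorem affineLift_contLinear_apply (d : ℝ × ℝ) : affineLift.contLinear d = ![d.1, d.2, 0] := by
  ext k; fin_cases k <;> simp [affineLift]

theorem smul_criticalEndChart {h : ℝ × ℝ → ℝ} {q : ℝ × ℝ} (hq : h q ≠ 0) :
    h q • criticalEndChart h q = affineLift q := by
  ext k; fin_cases k <;> simp [criticalEndChart, affineLift_apply, mul_div_cancel₀, hq]

theorem det_affineLift (q : ℝ × ℝ) :
    (Matrix.of (Matrix.vecCons (affineLift q)
      fun k => affineLift.contLinear (Basis.finTwoProd ℝ k))).det = 1 := by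
  simp [Matrix.det_fin_three, affineLift_apply, affineLift_contLinear_apply]

theorem det3_fderiv_fderiv_of_eventuallyEq_criticalEndChart {h : ℝ × ℝ → ℝ}
    {β : ℝ × ℝ → Fin 3 → ℝ} {p : ℝ × ℝ} (hh : ContDiffAt ℝ 2 h p) (hp : h p ≠ 0)
    (hβ : β =ᶠ[𝓝 p] criticalEndChart h) (i j : Fin 2) :
    det3 (fderiv ℝ (fun q => fderiv ℝ β q (Basis.finTwoProd ℝ i)) p
        (Basis.finTwoProd ℝ j)) (vdu β p) (vdv β p) =
      -fderiv ℝ (fun q => fderiv ℝ h q (Basis.finTwoProd ℝ i)) p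
        (Basis.finTwoProd ℝ j) / h p ^ 4 := by
  have lift : h • β =ᶠ[𝓝 p] affineLift := by
    filter_upwards [hβ, hh.continuousAt.eventually_ne hp] with q hq hq₀
    rw [Pi.smul_apply', hq, smul_criticalEndChart hq₀]
  have hβ₂ : ContDiffAt ℝ 2 β p :=
    contDiffAt_of_smul_eventuallyEq hh affineLift.contDiff.contDiffAt hp lift
  have rows : (fun k => fderiv ℝ β p (Basis.finTwoProd ℝ k)) = ![vdu β p, vdv β p] := by
    ext k; fin_cases k <;> simp [vdu, vdv]
  have pow_mul_det := pow_mul_det_vecCons_fderiv_fderiv hh hβ₂ lift (Basis.finTwoProd ℝ) i j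
  rw [det_affineLift, mul_one, rows] at pow_mul_det
  rw [eq_div_iff (pow_ne_zero 4 hp), mul_comm]
  exact pow_mul_det

end CriticalEndChart

section DotCross

variable (x y : Fin 3 → ℝ)

theorem dot3_eq_dotProduct : dot3 x y = x ⬝ᵥ y := (Matrix.vec3_dotProduct x y).symm

theorem cross3_eq_crossProduct : cross3 x y = crossProduct x y := (cross_apply x y).symm

theorem dot3_mul_dot3_sub_dot3_sq :
    dot3 x x * dot3 y y - dot3 x y ^ 2 = dot3 (cross3 x y) (cross3 x y) := by
  simp only [dot3_eq_dotProduct, cross3_eq_crossProduct, cross_dot_cross, dotProduct_comm y x, sq]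

end DotCross

/-- triple products and second fundamental form coefficients of the critical
end chart `β(u,v) = (u/h, v/h, 1/h)`. -/
theorem stmt_16 (U : Set (ℝ × ℝ)) (hU : IsOpen U) (h : ℝ × ℝ → ℝ)
    (hh : ContDiffOn ℝ 2 h U) (hpos : ∀ p ∈ U, 0 < h p)
    (β : ℝ × ℝ → Fin 3 → ℝ)
    (hβ : ∀ p ∈ U, β p = ![p.1 / h p, p.2 / h p, 1 / h p]) :
    ∀ p ∈ U,
      det3 (vdu (vdu β) p) (vdu β p) (vdv β p) = -(pdu (pdu h) p) / h p ^ 4 ∧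
      det3 (vdv (vdu β) p) (vdu β p) (vdv β p) = -(pdv (pdu h) p) / h p ^ 4 ∧
      det3 (vdv (vdv β) p) (vdu β p) (vdv β p) = -(pdv (pdv h) p) / h p ^ 4 ∧
      (let E := dot3 (vdu β p) (vdu β p)
       let F := dot3 (vdu β p) (vdv β p)
       let G := dot3 (vdv β p) (vdv β p)
       let nrm := Real.sqrt
         (dot3 (cross3 (vdu β p) (vdv β p)) (cross3 (vdu β p) (vdv β p)))
       E * G - F ^ 2 =
         dot3 (cross3 (vdu β p) (vdv β p)) (cross3 (vdu β p) (vdv β p)) ∧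
       det3 (vdu (vdu β) p) (vdu β p) (vdv β p) / nrm =
         -(pdu (pdu h) p) / (h p ^ 4 * Real.sqrt (E * G - F ^ 2)) ∧
       det3 (vdv (vdu β) p) (vdu β p) (vdv β p) / nrm =
         -(pdv (pdu h) p) / (h p ^ 4 * Real.sqrt (E * G - F ^ 2)) ∧
       det3 (vdv (vdv β) p) (vdu β p) (vdv β p) / nrm =
         -(pdv (pdv h) p) / (h p ^ 4 * Real.sqrt (E * G - F ^ 2))) := by
  intro p hp
  have det_eq := det3_fderiv_fderiv_of_eventuallyEq_criticalEndChart
    (hh.contDiffAt (hU.mem_nhds hp)) (hpos p hp).ne' (eventually_of_mem (hU.mem_nhds hp) hβ)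
  have det_uu : det3 (vdu (vdu β) p) (vdu β p) (vdv β p) = -(pdu (pdu h) p) / h p ^ 4 := by
    simpa only [Basis.finTwoProd_zero] using! det_eq 0 0
  have det_uv : det3 (vdv (vdu β) p) (vdu β p) (vdv β p) = -(pdv (pdu h) p) / h p ^ 4 := by
    simpa only [Basis.finTwoProd_zero, Basis.finTwoProd_one] using! det_eq 0 1
  have det_vv : det3 (vdv (vdv β) p) (vdu β p) (vdv β p) = -(pdv (pdv h) p) / h p ^ 4 := by
    simpa only [Basis.finTwoProd_one] using! det_eq 1 1
  have lagrange := dot3_mul_dot3_sub_dot3_sq (vdu β p) (vdv β p)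
  refine ⟨det_uu, det_uv, det_vv, lagrange, ?_, ?_, ?_⟩
  · rw [lagrange, det_uu, div_div]
  · rw [lagrange, det_uv, div_div]
  · rw [lagrange, det_vv, div_div]
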